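/- arXiv:1802.02225 — 4 statements merged into one kernel-verified Lean document; each statement's English description precedes it below -/
import Mathlib

section
/- Let (W,S) be a Coxeter system and let t_0, t_1, …, t_r be pairwise distinct elements of S such that t_i t_{i-1} ≠ t_{i-1} t_i for all i = 1, …, r. Let w ∈ W be such that t_0 t_1 ⋯ t_r ≤ w in the Bruhat order. Then every reduced word for w has (t_0, t_1, …, t_r) as a subsequence. -/
/-- The Bruhat order on a Coxeter group, characterized by the subword property:
`v ≤ w` if and only if every reduced word for `w` contains a reduced word for `v`
as a subsequence. -/
def CoxeterSystem.bruhatLE {B : Type*} {W : Type*} [Group W] {M : CoxeterMatrix B}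
    (cs : CoxeterSystem M W) (v w : W) : Prop :=
  ∀ ω : List B, cs.IsReduced ω → cs.wordProd ω = w →
    ∃ ω' : List B, ω'.Sublist ω ∧ cs.IsReduced ω' ∧ cs.wordProd ω' = v

/-!
A Coxeter system acts on a realization in the sense of Kac: a real vector space with roots `α i` and
coroots `f i` such that `f i (α j) = -2 cos (π / M i j)`, the `α i` are linearly independent and the
`f i` take arbitrary prescribed values on a common vector. The simple reflection `s i` changes only
the `α i`-coordinate of a vector.

Let `L = L₁ ++ b :: L₂` have distinct letters. Prescribing the coroots on `p` suitably, one gets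
`L p = p + α b` with `f a p = -f a (α b)` for `a` in `L₁`. Let `ω` be no longer than `L` and have
the same product. The `α b`-coordinate of `p` changes, so `b` occurs in `ω`; hence `ω` is a
permutation of `L`. Now take `b` to be the first letter of `ω`. The later letters of `ω` do not
change the coordinates of `p`, so their coroots vanish at `p`. If `b` were not the first letter of
`L`, its predecessor `a` in `L` would contradict this, as `f a (α b) ≠ 0`. So the first letters of
`ω` and `L` agree and cancel, and `ω = L` follows.
-/

theorem exists_eq_add_smul_add_smul_of_mul_ne_four {K V : Type*} [Field K] [AddCommGroup V]
    [Module K V] {x y : V} {f g : Module.Dual K V} (hf : f x = 2) (hg : g y = 2)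
    (hfg : f y * g x ≠ 4) (z : V) :
    ∃ z₀ : V, f z₀ = 0 ∧ g z₀ = 0 ∧ ∃ a b : K, z = z₀ + a • x + b • y := by
  have det_ne_zero : 4 - f y * g x ≠ 0 := sub_ne_zero.2 hfg.symm
  set a := (2 * f z - f y * g z) / (4 - f y * g x) with ha
  set b := (2 * g z - g x * f z) / (4 - f y * g x) with hb
  refine ⟨z - a • x - b • y, ?_, ?_, a, b, by module⟩
  · simp only [map_sub, map_smul, hf, smul_eq_mul, ha, hb]
    field_simp
    ring
  · simp only [map_sub, map_smul, hg, smul_eq_mul, ha, hb]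
    field_simp
    ring

section Dihedral

open Real

variable {V : Type*} [AddCommGroup V] [Module ℝ V] {x y : V} {f g : Module.Dual ℝ V}
  (hf : f x = 2) (hg : g y = 2)

theorem reflection_mul_reflection_apply_sin {θ : ℝ} (hfy : f y = -2 * cos θ)
    (hgx : g x = -2 * cos θ) (φ : ℝ) :
    (Module.reflection hf * Module.reflection hg) (sin (φ + θ) • x + sin φ • y) =
      sin (φ + 2 * θ + θ) • x + sin (φ + 2 * θ) • y := by
  have sin_recurrence (ψ : ℝ) : sin (ψ + 2 * θ) = 2 * cos θ * sin (ψ + θ) - sin ψ := by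
    have hadd := sin_add (ψ + θ) θ
    have hsub := sin_sub (ψ + θ) θ
    rw [add_assoc, ← two_mul] at hadd
    rw [add_sub_cancel_right] at hsub
    linear_combination hadd + hsub
  have reflect_y : Module.reflection hg (sin (φ + θ) • x + sin φ • y) =
      sin (φ + θ) • x + sin (φ + 2 * θ) • y := by
    rw [sin_recurrence φ, Module.reflection_apply, map_add, map_smul, map_smul, hgx, hg]
    module
  have reflect_x : Module.reflection hf (sin (φ + θ) • x + sin (φ + 2 * θ) • y) =
      sin (φ + 2 * θ + θ) • x + sin (φ + 2 * θ) • y := by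
    rw [show φ + 2 * θ + θ = φ + θ + 2 * θ by ring, sin_recurrence (φ + θ),
      show φ + θ + θ = φ + 2 * θ by ring, Module.reflection_apply, map_add, map_smul, map_smul,
      hfy, hf]
    module
  rw [LinearEquiv.mul_apply, reflect_y, reflect_x]

theorem reflection_mul_reflection_pow_apply_sin {θ : ℝ} (hfy : f y = -2 * cos θ)
    (hgx : g x = -2 * cos θ) (φ : ℝ) (n : ℕ) :
    ((Module.reflection hf * Module.reflection hg) ^ n) (sin (φ + θ) • x + sin φ • y) =
      sin (φ + n * (2 * θ) + θ) • x + sin (φ + n * (2 * θ)) • y := by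
  induction n with
  | zero => simp
  | succ n ih =>
    rw [pow_succ', LinearEquiv.mul_apply, ih,
      reflection_mul_reflection_apply_sin hf hg hfy hgx (φ + n * (2 * θ))]
    push_cast
    ring_nf

-- Every vector is the sum of one fixed by both reflections and one in the plane spanned by `x` and
-- `y`, where the product of the reflections is a rotation by `2 * π / m`.
theorem reflection_mul_reflection_pow_eq_one {m : ℕ} (hm : 2 ≤ m)
    (hfy : f y = -2 * cos (π / m)) (hgx : g x = -2 * cos (π / m)) :
    (Module.reflection hf * Module.reflection hg) ^ m = 1 := by
  set θ := π / m with hθ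
  set T := Module.reflection hf * Module.reflection hg with hT
  have hm₂ : (2 : ℝ) ≤ m := by exact_mod_cast hm
  have sin_ne_zero : sin θ ≠ 0 :=
    (sin_pos_of_pos_of_lt_pi (by positivity) (div_lt_self pi_pos (by linarith))).ne'
  have mul_ne_four : f y * g x ≠ 4 := fun h => by
    rw [hfy, hgx] at h
    have hsq : sin θ ^ 2 = 0 := by linear_combination sin_sq_add_cos_sq θ - h / 4
    exact sin_ne_zero (pow_eq_zero_iff two_ne_zero |>.1 hsq)
  have full_turn : m * (2 * θ) = 2 * π := by rw [hθ]; field_simp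
  have fix_plane (φ : ℝ) :
      (T ^ m) (sin (φ + θ) • x + sin φ • y) = sin (φ + θ) • x + sin φ • y := by
    rw [hT, reflection_mul_reflection_pow_apply_sin hf hg hfy hgx, full_turn,
      add_right_comm, sin_add_two_pi, sin_add_two_pi]
  have fix_x : (T ^ m) x = x := by
    simpa [sin_ne_zero] using fix_plane 0
  have fix_y : (T ^ m) y = y := by
    simpa [sin_ne_zero] using fix_plane (-θ)
  ext z
  obtain ⟨z₀, hfz₀, hgz₀, a, b, rfl⟩ :=
    exists_eq_add_smul_add_smul_of_mul_ne_four hf hg mul_ne_four z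
  have fix_z₀ : (T ^ m) z₀ = z₀ := by
    have hTz₀ : T z₀ = z₀ := by
      simp [hT, Module.reflection_apply, hfz₀, hgz₀]
    rw [LinearEquiv.pow_apply]
    exact Function.iterate_fixed hTz₀ m
  simp only [map_add, map_smul, fix_x, fix_y, fix_z₀, LinearEquiv.coe_one, id_eq]

end Dihedral

open Real in
theorem cos_pi_div_natCast_ne_zero {m : ℕ} (hm : m ≠ 2) : cos (π / m) ≠ 0 := by
  obtain rfl | rfl | hm₃ : m = 0 ∨ m = 1 ∨ 2 < m := by omega
  · simp
  · simp
  · have hm₃' : (2 : ℝ) < m := by exact_mod_cast hm₃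
    have hpos : 0 < π / m := by positivity
    have hlt : π / m < π / 2 := div_lt_div_of_pos_left pi_pos two_pos hm₃'
    exact (cos_pos_of_mem_Ioo ⟨by linarith, hlt⟩).ne'

section Cartan

variable {B : Type*} (M : CoxeterMatrix B)

/-- The Cartan matrix of a Coxeter matrix `M`, i.e. twice the Gram matrix of its Tits form. The
convention `π / 0 = 0` gives the usual entry `-2` where `M i j = 0` encodes infinite order. -/
noncomputable def coxeterCartan (i j : B) : ℝ := -2 * Real.cos (Real.pi / M i j)

theorem coxeterCartan_self (i : B) : coxeterCartan M i i = 2 := by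
  simp [coxeterCartan]

theorem coxeterCartan_comm (i j : B) : coxeterCartan M i j = coxeterCartan M j i := by
  rw [coxeterCartan, coxeterCartan, M.symmetric]

variable {M} in
theorem coxeterCartan_ne_zero {i j : B} (h : M i j ≠ 2) : coxeterCartan M i j ≠ 0 :=
  mul_ne_zero (by norm_num) (cos_pi_div_natCast_ne_zero h)

end Cartan

/-- The space of a realization, in the sense of Kac, of the Cartan matrix of a Coxeter matrix on
`B`. The first factor is spanned by the roots; the second one makes the coroots take arbitrary
values, even if the Cartan matrix is singular. -/
abbrev CoxeterRealization (B : Type*) : Type _ := (B →₀ ℝ) × (B → ℝ)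

namespace CoxeterRealization

variable {B : Type*}

/-- The simple root `α i`. -/
noncomputable def root (i : B) : CoxeterRealization B := (Finsupp.single i 1, 0)

/-- The simple coroot of index `i`: the Cartan matrix on the first factor, the `i`-th coordinate on
the second. -/
noncomputable def coroot (M : CoxeterMatrix B) (i : B) : Module.Dual ℝ (CoxeterRealization B) :=
  (Finsupp.linearCombination ℝ (coxeterCartan M i)).coprod (LinearMap.proj i)

theorem coroot_root (M : CoxeterMatrix B) (i j : B) :
    coroot M i (root j) = coxeterCartan M i j := by
  simp [coroot, root]

theorem coroot_root_self (M : CoxeterMatrix B) (i : B) : coroot M i (root i) = 2 := by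
  rw [coroot_root, coxeterCartan_self]

theorem exists_coroot_eq (M : CoxeterMatrix B) (y : B → ℝ) :
    ∃ p : CoxeterRealization B, ∀ i, coroot M i p = y i :=
  ⟨(0, y), fun i => by simp [coroot]⟩

/-- The simple reflection `p ↦ p - f i p • α i`. -/
noncomputable def reflection (M : CoxeterMatrix B) (i : B) :
    CoxeterRealization B ≃ₗ[ℝ] CoxeterRealization B :=
  Module.reflection (coroot_root_self M i)

theorem reflection_apply (M : CoxeterMatrix B) (i : B) (p : CoxeterRealization B) :
    reflection M i p = p - coroot M i p • root i :=
  Module.reflection_apply _ _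

theorem reflection_fst_self (M : CoxeterMatrix B) (i : B) (p : CoxeterRealization B) :
    (reflection M i p).1 i = p.1 i - coroot M i p := by
  simp [reflection_apply, root]

theorem reflection_fst_of_ne (M : CoxeterMatrix B) {i j : B} (hij : i ≠ j)
    (p : CoxeterRealization B) : (reflection M i p).1 j = p.1 j := by
  simp [reflection_apply, root, hij]

theorem isLiftable_reflection (M : CoxeterMatrix B) : M.IsLiftable (reflection M) := by
  intro i j
  obtain rfl | hij := eq_or_ne i j
  · rw [M.diagonal, pow_one]
    ext1 p
    exact Module.involutive_reflection (coroot_root_self M i) p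
  obtain h₀ | h₀ := eq_or_ne (M i j) 0
  · rw [h₀, pow_zero]
  · have hm : 2 ≤ M i j := by
      have := M.off_diagonal i j hij
      omega
    refine reflection_mul_reflection_pow_eq_one _ _ hm (coroot_root M i j) ?_
    rw [coroot_root, coxeterCartan_comm, coxeterCartan]

variable {W : Type*} [Group W] {M : CoxeterMatrix B} (cs : CoxeterSystem M W)

/-- The representation in which the simple reflections of the Coxeter system act by
`CoxeterRealization.reflection`. -/
noncomputable def rep : W →* (CoxeterRealization B ≃ₗ[ℝ] CoxeterRealization B) :=
  cs.lift ⟨reflection M, isLiftable_reflection M⟩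

theorem rep_wordProd_cons_apply (i : B) (ω : List B) (p : CoxeterRealization B) :
    rep cs (cs.wordProd (i :: ω)) p = reflection M i (rep cs (cs.wordProd ω) p) := by
  rw [cs.wordProd_cons, map_mul, LinearEquiv.mul_apply, rep, cs.lift_apply_simple]

theorem rep_wordProd_fst_of_notMem {j : B} {ω : List B} (hj : j ∉ ω) (p : CoxeterRealization B) :
    (rep cs (cs.wordProd ω) p).1 j = p.1 j := by
  induction ω with
  | nil => simp
  | cons i ω ih =>
    rw [List.mem_cons, not_or] at hj
    rw [rep_wordProd_cons_apply, reflection_fst_of_ne M (Ne.symm hj.1), ih hj.2]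

theorem rep_wordProd_apply_of_coroot_eq_zero {ω : List B} {p : CoxeterRealization B}
    (hp : ∀ i ∈ ω, coroot M i p = 0) : rep cs (cs.wordProd ω) p = p := by
  induction ω with
  | nil => simp
  | cons i ω ih =>
    rw [List.forall_mem_cons] at hp
    rw [rep_wordProd_cons_apply, ih hp.2, reflection_apply, hp.1, zero_smul, sub_zero]

theorem coroot_eq_zero_of_rep_wordProd_fst_eq {ω : List B} (hω : ω.Nodup)
    {p : CoxeterRealization B} (hp : ∀ i ∈ ω, (rep cs (cs.wordProd ω) p).1 i = p.1 i) :
    ∀ i ∈ ω, coroot M i p = 0 := by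
  induction ω with
  | nil => simp
  | cons a ω ih =>
    obtain ⟨haω, hω⟩ := List.nodup_cons.1 hω
    have tail_zero : ∀ i ∈ ω, coroot M i p = 0 := by
      refine ih hω fun i hi => ?_
      rw [← hp i (List.mem_cons_of_mem a hi), rep_wordProd_cons_apply,
        reflection_fst_of_ne M (ne_of_mem_of_not_mem hi haω).symm]
    have head_coord := hp a List.mem_cons_self
    rw [rep_wordProd_cons_apply, rep_wordProd_apply_of_coroot_eq_zero cs tail_zero,
      reflection_fst_self, sub_eq_self] at head_coord
    exact List.forall_mem_cons.2 ⟨head_coord, tail_zero⟩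

theorem exists_rep_wordProd_apply_eq_add_root {L₁ L₂ : List B} {b : B}
    (hL : (L₁ ++ b :: L₂).Nodup) :
    ∃ p : CoxeterRealization B, (∀ a ∈ L₁, coroot M a p = -coxeterCartan M a b) ∧
      rep cs (cs.wordProd (L₁ ++ b :: L₂)) p = p + root b := by
  classical
  obtain ⟨hb, hL⟩ := List.nodup_cons.1 (List.nodup_middle.1 hL)
  rw [List.mem_append, not_or] at hb
  obtain ⟨p, hp⟩ := exists_coroot_eq M fun c =>
    if c = b then -1 else if c ∈ L₁ then -coxeterCartan M c b else 0
  have coroot_left : ∀ a ∈ L₁, coroot M a p = -coxeterCartan M a b := fun a ha => by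
    rw [hp, if_neg (ne_of_mem_of_not_mem ha hb.1), if_pos ha]
  have coroot_right : ∀ c ∈ L₂, coroot M c p = 0 := fun c hc => by
    rw [hp, if_neg (ne_of_mem_of_not_mem hc hb.2),
      if_neg fun hc₁ => List.disjoint_of_nodup_append hL hc₁ hc]
  have reflection_p : reflection M b p = p + root b := by
    rw [reflection_apply, hp, if_pos rfl]
    module
  refine ⟨p, coroot_left, ?_⟩
  rw [cs.wordProd_append, map_mul, LinearEquiv.mul_apply, rep_wordProd_cons_apply,
    rep_wordProd_apply_of_coroot_eq_zero cs coroot_right, reflection_p]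
  refine rep_wordProd_apply_of_coroot_eq_zero cs fun a ha => ?_
  rw [map_add, coroot_left a ha, coroot_root, neg_add_cancel]

end CoxeterRealization

section Words

open CoxeterRealization

variable {B W : Type*} [Group W] {M : CoxeterMatrix B} (cs : CoxeterSystem M W)

theorem mem_of_wordProd_eq_of_nodup {L ω : List B} (hL : L.Nodup)
    (h : cs.wordProd ω = cs.wordProd L) {b : B} (hb : b ∈ L) : b ∈ ω := by
  by_contra hbω
  obtain ⟨L₁, L₂, rfl⟩ := List.append_of_mem hb
  obtain ⟨p, -, hp⟩ := exists_rep_wordProd_apply_eq_add_root cs hL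
  have coord_b := rep_wordProd_fst_of_notMem cs hbω p
  rw [h, hp] at coord_b
  simp [root] at coord_b

theorem perm_of_wordProd_eq_of_nodup {L ω : List B} (hL : L.Nodup)
    (hlen : ω.length ≤ L.length) (h : cs.wordProd ω = cs.wordProd L) : ω.Perm L :=
  ((List.subperm_of_subset hL fun _ hb => mem_of_wordProd_eq_of_nodup cs hL h hb).perm_of_length_le
    hlen).symm

theorem wordProd_cons_ne_of_nodup {L₁ L₂ ω : List B} {a b : B} (hL : (L₁ ++ b :: L₂).Nodup)
    (ha : a ∈ L₁) (hab : M a b ≠ 2) (hω : (b :: ω).Nodup) (haω : a ∈ ω) :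
    cs.wordProd (b :: ω) ≠ cs.wordProd (L₁ ++ b :: L₂) := by
  intro h
  obtain ⟨p, coroot_left, hp⟩ := exists_rep_wordProd_apply_eq_add_root cs hL
  obtain ⟨hbω, hω⟩ := List.nodup_cons.1 hω
  have coord_eq : ∀ c ∈ ω, (rep cs (cs.wordProd ω) p).1 c = p.1 c := by
    intro c hc
    have hbc : b ≠ c := (ne_of_mem_of_not_mem hc hbω).symm
    rw [← reflection_fst_of_ne M hbc, ← rep_wordProd_cons_apply, h, hp]
    simp [root, hbc]
  have coroot_zero := coroot_eq_zero_of_rep_wordProd_fst_eq cs hω coord_eq a haω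
  rw [coroot_left a ha, neg_eq_zero] at coroot_zero
  exact coxeterCartan_ne_zero hab coroot_zero

theorem head_eq_of_wordProd_eq_of_nodup_of_isChain {L ω : List B} {a b : B} (hL : (a :: L).Nodup)
    (hchain : (a :: L).IsChain fun i j => M i j ≠ 2) (hperm : (b :: ω).Perm (a :: L))
    (h : cs.wordProd (b :: ω) = cs.wordProd (a :: L)) : b = a := by
  by_contra hba
  have hbL : b ∈ L := (List.mem_cons.1 (hperm.mem_iff.1 List.mem_cons_self)).resolve_left hba
  obtain ⟨L₁, L₂, rfl⟩ := List.append_of_mem hbL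
  obtain ⟨K, c, hK⟩ := List.eq_nil_or_concat' (a :: L₁) |>.resolve_left (List.cons_ne_nil a L₁)
  rw [← List.cons_append, hK] at hL hchain hperm h
  have hcb : M c b ≠ 2 :=
    (List.isChain_append.1 hchain).2.2 c (by simp) b (by simp)
  have hcL : c ∈ K ++ [c] := by simp
  have hne : c ≠ b := fun hcb' =>
    List.disjoint_of_nodup_append hL hcL (hcb' ▸ List.mem_cons_self)
  have hcω : c ∈ ω :=
    (List.mem_cons.1 (hperm.mem_iff.2 (List.mem_append_left _ hcL))).resolve_left hne
  exact wordProd_cons_ne_of_nodup cs hL hcL hcb (hperm.nodup_iff.2 hL) hcω h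

theorem eq_of_wordProd_eq_of_nodup_of_isChain {L ω : List B} (hL : L.Nodup)
    (hchain : L.IsChain fun i j => M i j ≠ 2) (hlen : ω.length ≤ L.length)
    (h : cs.wordProd ω = cs.wordProd L) : ω = L := by
  induction L generalizing ω with
  | nil => exact List.eq_nil_of_length_eq_zero (Nat.le_zero.1 hlen)
  | cons a L ih =>
    have hperm := perm_of_wordProd_eq_of_nodup cs hL hlen h
    cases ω with
    | nil => simp at hperm
    | cons b ω =>
      obtain rfl := head_eq_of_wordProd_eq_of_nodup_of_isChain cs hL hchain hperm h
      rw [cs.wordProd_cons, cs.wordProd_cons, mul_right_inj] at h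
      rw [ih hL.of_cons hchain.tail (Nat.le_of_succ_le_succ hlen) h]

theorem simple_mul_simple_comm_of_eq_two {i j : B} (h : M i j = 2) :
    cs.simple i * cs.simple j = cs.simple j * cs.simple i := by
  have hsq := cs.simple_mul_simple_pow i j
  rw [h, sq] at hsq
  rw [eq_inv_of_mul_eq_one_left hsq, mul_inv_rev, cs.inv_simple, cs.inv_simple]

end Words

/-- Let `t 0, …, t r` be pairwise distinct simple reflections such that
consecutive ones do not commute, and let `w` be an element with
`t 0 * t 1 * ⋯ * t r ≤ w` in the Bruhat order. Then every reduced word for `w` has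
`(t 0, …, t r)` as a subsequence. -/
theorem every_reduced_word_has_chain_as_subsequence
    {B : Type*} {W : Type*} [Group W] {M : CoxeterMatrix B} (cs : CoxeterSystem M W)
    (r : ℕ) (t : Fin (r + 1) → B)
    (hdist : Function.Injective fun i => cs.simple (t i))
    (hnc : ∀ i : Fin r,
      cs.simple (t i.succ) * cs.simple (t i.castSucc) ≠
        cs.simple (t i.castSucc) * cs.simple (t i.succ))
    (w : W) (hle : cs.bruhatLE (cs.wordProd (List.ofFn t)) w) :
    ∀ ω : List B, cs.IsReduced ω → cs.wordProd ω = w → (List.ofFn t).Sublist ω := by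
  intro ω hω hw
  obtain ⟨ω', hsub, hred, hprod⟩ := hle ω hω hw
  have hnodup : (List.ofFn t).Nodup :=
    List.nodup_ofFn.2 (Function.Injective.of_comp (f := cs.simple) hdist)
  have hchain : (List.ofFn t).IsChain fun i j => M i j ≠ 2 :=
    List.isChain_ofFn.2 fun i hi h₂ =>
      hnc ⟨i, by omega⟩ (simple_mul_simple_comm_of_eq_two cs h₂).symm
  have hlen : ω'.length ≤ (List.ofFn t).length := by
    rw [← hred.eq, hprod]
    exact cs.length_wordProd_le _
  rwa [← eq_of_wordProd_eq_of_nodup_of_isChain cs hnodup hchain hlen hprod]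
end

section
/- Let (W,S) be a Coxeter system and let t_0, t_1, …, t_r be pairwise distinct elements of S such that t_i t_{i-1} ≠ t_{i-1} t_i for all i = 1, …, r. Let w ∈ W be such that t_0 t_1 ⋯ t_r ≤ w in the Bruhat order, and let s ∈ S with s ≠ t_0. Then t_0 t_1 ⋯ t_r ≤ s w in the Bruhat order. -/
/-!
Deleting letters from reduced words shows that `v ≤ w` implies `v ≤ s * w` unless `s` is a left
descent of `v`, so it is enough that `t 0` is the only left descent of `v = t 0 * ⋯ * t r`.
Write `v = a * v'` with `a = t 0`; then `v'` lies in the parabolic subgroup generated by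
`t 1, …, t r`, which does not contain `a`. If `s ≠ a` were a left descent of `v`, two applications
of the exchange condition, to a word of `v` starting with `a` and to one starting with `s * a`,
would show that `s` commutes with `a` and is a left descent of `v'`. By induction on the length of
the chain `s = t 1`, which does not commute with `t 0`.

The exchange condition itself comes from the action of `W` on `W × ZMod 2` in which a simple
reflection conjugates the first component and flips the second one where the first is that
reflection: this action shows that the parity of the number of occurrences of an element in an
inversion sequence does not depend on the word.
-/

namespace CoxeterChain

open CoxeterSystem

variable {B : Type*} {W : Type*} [Group W] {M : CoxeterMatrix B} (cs : CoxeterSystem M W)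

section InversionParity

theorem simple_mul_pow_eq_inv_mul_simple (i j : B) (n : ℕ) :
    cs.simple j * (cs.simple i * cs.simple j) ^ n =
      ((cs.simple i * cs.simple j) ^ n)⁻¹ * cs.simple j := by
  have hconj : cs.simple j * (cs.simple i * cs.simple j) * (cs.simple j)⁻¹ =
      (cs.simple i * cs.simple j)⁻¹ := by simp [mul_assoc]
  rw [← inv_pow, ← hconj, conj_pow, inv_mul_cancel_right]

theorem rightInvSeq_flatten_replicate (i j : B) (n : ℕ) :
    cs.rightInvSeq (List.replicate n [i, j]).flatten =
      ((List.range (2 * n)).map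
        fun k => cs.simple j * (cs.simple i * cs.simple j) ^ k).reverse := by
  induction n with
  | zero => simp
  | succ n ih =>
    have hprod : cs.wordProd (List.replicate n [i, j]).flatten =
        (cs.simple i * cs.simple j) ^ n := by
      simp [wordProd, List.map_flatten, List.prod_flatten]
    rw [show 2 * (n + 1) = 2 * n + 1 + 1 by ring, List.range_succ, List.range_succ]
    simp only [List.replicate_succ, List.flatten_cons, List.cons_append, List.nil_append,
      rightInvSeq, wordProd_cons, hprod, ih, List.map_append, List.map_cons, List.map_nil,
      List.reverse_append, List.reverse_cons, List.reverse_nil, List.cons.injEq, and_true]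
    constructor
    · rw [show 2 * n + 1 = n + 1 + n by ring, pow_add, ← mul_assoc (cs.simple j) (_ ^ (n + 1)),
        simple_mul_pow_eq_inv_mul_simple cs i j (n + 1), pow_succ']
      simp only [mul_inv_rev, inv_simple, mul_assoc]
    · rw [two_mul, pow_add, ← mul_assoc, simple_mul_pow_eq_inv_mul_simple]

open Classical in
/-- The map `(x, e) ↦ (s x s, e + [x = s])` for the simple reflection `s = cs.simple i`, which
counts occurrences in inversion sequences modulo 2. It is an element of the monoid
`Function.End (W × ZMod 2)` so that `CoxeterSystem.lift` applies. -/
noncomputable def signedConj (i : B) : Function.End (W × ZMod 2) :=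
  fun p => (cs.simple i * p.1 * cs.simple i, p.2 + if p.1 = cs.simple i then 1 else 0)

open Classical in
theorem prod_map_signedConj_apply (ω : List B) (x : W) (e : ZMod 2) :
    (ω.map (signedConj cs)).prod (x, e) =
      (cs.wordProd ω * x * (cs.wordProd ω)⁻¹, e + ((cs.rightInvSeq ω).count x : ZMod 2)) := by
  induction ω with
  | nil => simp [Function.End.one_def]
  | cons i ω ih =>
    have hiff : cs.wordProd ω * x * (cs.wordProd ω)⁻¹ = cs.simple i ↔
        (cs.wordProd ω)⁻¹ * cs.simple i * cs.wordProd ω = x := by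
      rw [mul_inv_eq_iff_eq_mul, mul_assoc, inv_mul_eq_iff_eq_mul, eq_comm]
    rw [List.map_cons, List.prod_cons]
    change signedConj cs i ((ω.map (signedConj cs)).prod (x, e)) = _
    rw [ih]
    simp [signedConj, rightInvSeq, List.count_cons, hiff, wordProd_cons, ← mul_assoc, add_assoc]

theorem isLiftable_signedConj : M.IsLiftable (signedConj cs) := by
  classical
  intro i j
  set ω := (List.replicate (M i j) [i, j]).flatten
  have hω : cs.wordProd ω = 1 := by
    simp [ω, wordProd, List.map_flatten, List.prod_flatten]
  have hcount (x : W) : ((cs.rightInvSeq ω).count x : ZMod 2) = 0 := by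
    rw [rightInvSeq_flatten_replicate, two_mul, List.range_add]
    simp [pow_add, Function.comp_def, CharTwo.add_self_eq_zero]
  have hprod : (signedConj cs i * signedConj cs j) ^ M i j = (ω.map (signedConj cs)).prod := by
    simp [ω, List.map_flatten, List.prod_flatten]
  rw [hprod]
  funext ⟨x, e⟩
  rw [prod_map_signedConj_apply, hω, hcount]
  simp [Function.End.one_def]

open Classical in
theorem count_rightInvSeq_eq_of_wordProd_eq {ω ν : List B} (h : cs.wordProd ω = cs.wordProd ν)
    (x : W) : ((cs.rightInvSeq ω).count x : ZMod 2) = (cs.rightInvSeq ν).count x := by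
  have hlift (μ : List B) : cs.lift ⟨signedConj cs, isLiftable_signedConj cs⟩ (cs.wordProd μ) =
      (μ.map (signedConj cs)).prod := by
    simp [wordProd, map_list_prod, Function.comp_def]
  have hprod : (ω.map (signedConj cs)).prod (x, 0) = (ν.map (signedConj cs)).prod (x, 0) := by
    rw [← hlift, ← hlift, h]
  simpa [prod_map_signedConj_apply] using congrArg Prod.snd hprod

open Classical in
theorem count_leftInvSeq_eq_of_wordProd_eq {ω ν : List B} (h : cs.wordProd ω = cs.wordProd ν)
    (x : W) : ((cs.leftInvSeq ω).count x : ZMod 2) = (cs.leftInvSeq ν).count x := by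
  have hrev : cs.wordProd ω.reverse = cs.wordProd ν.reverse := by simp [h]
  simpa [rightInvSeq_reverse] using count_rightInvSeq_eq_of_wordProd_eq cs hrev x

end InversionParity

section Exchange

variable {cs}

theorem simple_mem_leftInvSeq_of_isLeftDescent {ω : List B} {i : B}
    (h : cs.IsLeftDescent (cs.wordProd ω) i) : cs.simple i ∈ cs.leftInvSeq ω := by
  classical
  obtain ⟨ν, hν, hprod⟩ := cs.exists_isReduced (cs.simple i * cs.wordProd ω)
  have hnotMem : cs.simple i ∉ cs.leftInvSeq ν := fun hmem =>
    cs.isLeftDescent_iff_not_isLeftDescent_mul.mp h <| by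
      rw [hprod]
      exact (cs.isLeftInversion_simple_iff_isLeftDescent _ _).mp
        (cs.isLeftInversion_of_mem_leftInvSeq hν hmem)
  have hcons : cs.wordProd ω = cs.wordProd (i :: ν) := by
    rw [wordProd_cons, ← hprod, simple_mul_simple_cancel_left]
  have hmap : cs.simple i ∉ (cs.leftInvSeq ν).map (MulAut.conj (cs.simple i)) := by
    intro hmem
    obtain ⟨x, hx, hxi⟩ := List.mem_map.mp hmem
    obtain rfl : x = cs.simple i := (MulAut.conj (cs.simple i)).injective (by simpa using hxi)
    exact hnotMem hx
  have hcount := count_leftInvSeq_eq_of_wordProd_eq cs hcons (cs.simple i)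
  rw [leftInvSeq, List.count_cons_self, List.count_eq_zero_of_not_mem hmap] at hcount
  by_contra hmem
  simp [List.count_eq_zero_of_not_mem hmem] at hcount

theorem exists_simple_mul_wordProd_eq_eraseIdx {ω : List B} {i : B}
    (h : cs.IsLeftDescent (cs.wordProd ω) i) :
    ∃ j < ω.length, cs.simple i * cs.wordProd ω = cs.wordProd (ω.eraseIdx j) := by
  obtain ⟨j, hj, hji⟩ := List.mem_iff_getElem.mp (simple_mem_leftInvSeq_of_isLeftDescent h)
  refine ⟨j, by simpa using hj, ?_⟩
  rw [← getD_leftInvSeq_mul_wordProd, List.getD_eq_getElem _ _ hj, hji]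

theorem isReduced_eraseIdx_of_isLeftDescent {ω : List B} (hω : cs.IsReduced ω) {i : B}
    (hi : cs.IsLeftDescent (cs.wordProd ω) i) {j : ℕ} (hj : j < ω.length)
    (h : cs.simple i * cs.wordProd ω = cs.wordProd (ω.eraseIdx j)) :
    cs.IsReduced (ω.eraseIdx j) := by
  have hlen := cs.isLeftDescent_iff.mp hi
  have herase := List.length_eraseIdx_add_one hj
  rw [h, hω.eq] at hlen
  rw [CoxeterSystem.IsReduced]
  lia

theorem isReduced_cons_iff {ω : List B} (hω : cs.IsReduced ω) {i : B} :
    cs.IsReduced (i :: ω) ↔ ¬cs.IsLeftDescent (cs.wordProd ω) i := by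
  rw [not_isLeftDescent_iff, CoxeterSystem.IsReduced, wordProd_cons, hω.eq, List.length_cons]

theorem exists_sublist_isReduced (ω : List B) :
    ∃ ν : List B, ν.Sublist ω ∧ cs.IsReduced ν ∧ cs.wordProd ν = cs.wordProd ω := by
  induction ω with
  | nil => exact ⟨[], .slnil, by simp [CoxeterSystem.IsReduced], rfl⟩
  | cons i ω ih =>
    obtain ⟨ν, hsub, hν, hprod⟩ := ih
    by_cases hi : cs.IsLeftDescent (cs.wordProd ν) i
    · obtain ⟨j, hj, herase⟩ := exists_simple_mul_wordProd_eq_eraseIdx hi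
      exact ⟨ν.eraseIdx j, ((ν.eraseIdx_sublist j).trans hsub).cons i,
        isReduced_eraseIdx_of_isLeftDescent hν hi hj herase, by
          rw [← herase, hprod, wordProd_cons]⟩
    · exact ⟨i :: ν, hsub.cons_cons i, (isReduced_cons_iff hν).mpr hi, by
        rw [wordProd_cons, wordProd_cons, hprod]⟩

end Exchange

section Parabolic

/-- The standard parabolic subgroup `W_J`, generated by the simple reflections indexed by `J`. -/
def parabolic (J : Set B) : Subgroup W :=
  Subgroup.closure (cs.simple '' J)

variable {cs} {J : Set B}

theorem simple_mem_parabolic {i : B} (hi : i ∈ J) : cs.simple i ∈ parabolic cs J :=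
  Subgroup.subset_closure (Set.mem_image_of_mem _ hi)

theorem parabolic_mono {K : Set B} (h : J ⊆ K) : parabolic cs J ≤ parabolic cs K :=
  Subgroup.closure_mono (Set.image_mono h)

theorem wordProd_mem_parabolic {ω : List B} (hω : ∀ i ∈ ω, i ∈ J) :
    cs.wordProd ω ∈ parabolic cs J :=
  Subgroup.list_prod_mem _ <| by
    simpa using fun i hi => simple_mem_parabolic (hω i hi)

theorem mem_parabolic_iff {w : W} :
    w ∈ parabolic cs J ↔ ∃ ω : List B, (∀ i ∈ ω, i ∈ J) ∧ cs.wordProd ω = w := by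
  refine ⟨fun hw => ?_, fun ⟨ω, hω, h⟩ => h ▸ wordProd_mem_parabolic hω⟩
  induction hw using Subgroup.closure_induction with
  | mem x hx =>
    obtain ⟨i, hi, rfl⟩ := hx
    exact ⟨[i], by simpa using hi, by simp⟩
  | one => exact ⟨[], by simp, by simp⟩
  | mul x y _ _ hx hy =>
    obtain ⟨ω, hω, rfl⟩ := hx
    obtain ⟨ν, hν, rfl⟩ := hy
    exact ⟨ω ++ ν, by simpa [or_imp, forall_and] using ⟨hω, hν⟩, wordProd_append ..⟩
  | inv x _ hx =>
    obtain ⟨ω, hω, rfl⟩ := hx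
    exact ⟨ω.reverse, by simpa using hω, wordProd_reverse ..⟩

theorem simple_mem_parabolic_iff {i : B} :
    cs.simple i ∈ parabolic cs J ↔ cs.simple i ∈ cs.simple '' J := by
  refine ⟨fun hi => ?_, fun hi => Subgroup.subset_closure hi⟩
  obtain ⟨ω, hω, hprod⟩ := mem_parabolic_iff.mp hi
  obtain ⟨ν, hsub, hν, hνprod⟩ := exists_sublist_isReduced (cs := cs) ω
  have hlen : ν.length = 1 := by rw [← hν.eq, hνprod, hprod, length_simple]
  obtain ⟨j, rfl⟩ := List.length_eq_one_iff.mp hlen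
  exact ⟨j, hω j (hsub.subset (by simp)), by simpa [hprod] using hνprod⟩

theorem simple_mem_parabolic_of_isLeftDescent {v : W} (hv : v ∈ parabolic cs J) {i : B}
    (hi : cs.IsLeftDescent v i) : cs.simple i ∈ parabolic cs J := by
  obtain ⟨ω, hω, rfl⟩ := mem_parabolic_iff.mp hv
  obtain ⟨j, -, hj⟩ := exists_simple_mul_wordProd_eq_eraseIdx hi
  rw [← (parabolic cs J).mul_mem_cancel_right hv, hj]
  exact wordProd_mem_parabolic fun k hk => hω k (List.mem_of_mem_eraseIdx hk)

theorem simple_mem_parabolic_of_isLeftDescent_simple_mul {v : W} (hv : v ∈ parabolic cs J)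
    {a s : B} (hs : cs.simple s ≠ cs.simple a) (hd : cs.IsLeftDescent (cs.simple a * v) s) :
    cs.simple s ∈ parabolic cs J := by
  have hav : cs.simple a * v ∈ parabolic cs (insert a J) :=
    mul_mem (simple_mem_parabolic (Set.mem_insert a J))
      (parabolic_mono (Set.subset_insert a J) hv)
  have hmem := simple_mem_parabolic_of_isLeftDescent hav hd
  rw [simple_mem_parabolic_iff, Set.image_insert_eq] at hmem
  exact simple_mem_parabolic_iff.mpr (hmem.resolve_left hs)

theorem exists_mem_parabolic_simple_mul_simple_mul_eq {v : W} (hv : v ∈ parabolic cs J) {a s : B}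
    (hs : cs.simple s ≠ cs.simple a) (hd : cs.IsLeftDescent (cs.simple a * v) s) :
    ∃ u ∈ parabolic cs J, cs.simple s * (cs.simple a * v) = cs.simple a * u := by
  obtain ⟨ω, hω, rfl⟩ := mem_parabolic_iff.mp hv
  rw [← wordProd_cons] at hd ⊢
  obtain ⟨j, -, hj⟩ := exists_simple_mul_wordProd_eq_eraseIdx hd
  cases j with
  | zero =>
    rw [List.eraseIdx_cons_zero, wordProd_cons, ← mul_assoc, mul_eq_right,
      mul_eq_one_iff_eq_inv, inv_simple] at hj
    exact absurd hj hs
  | succ j =>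
    exact ⟨cs.wordProd (ω.eraseIdx j),
      wordProd_mem_parabolic fun k hk => hω k (List.mem_of_mem_eraseIdx hk), by
        rw [hj, List.eraseIdx_cons_succ, wordProd_cons]⟩

theorem not_isLeftDescent_of_mem_parabolic {v : W} (hv : v ∈ parabolic cs J) {a : B}
    (ha : cs.simple a ∉ parabolic cs J) : ¬cs.IsLeftDescent v a :=
  fun hd => ha (simple_mem_parabolic_of_isLeftDescent hv hd)

theorem eq_simple_mul_of_simple_mul_simple_mul_eq {v u : W} (hv : v ∈ parabolic cs J)
    (hu : u ∈ parabolic cs J) {a s : B} (ha : cs.simple a ∉ parabolic cs J)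
    (hs : cs.simple s ∈ parabolic cs J)
    (h : cs.simple s * (cs.simple a * v) = cs.simple a * u) : v = cs.simple s * u := by
  obtain ⟨ν, hν, rfl⟩ := mem_parabolic_iff.mp hu
  have hav : cs.simple a * v = cs.wordProd (s :: a :: ν) := by
    rw [wordProd_cons, wordProd_cons, ← h, simple_mul_simple_cancel_left]
  have hda : cs.IsLeftDescent (cs.wordProd (s :: a :: ν)) a := by
    rw [← hav, isLeftDescent_iff_not_isLeftDescent_mul, simple_mul_simple_cancel_left]
    exact not_isLeftDescent_of_mem_parabolic hv ha
  obtain ⟨j, -, hj⟩ := exists_simple_mul_wordProd_eq_eraseIdx hda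
  rw [← hav, simple_mul_simple_cancel_left] at hj
  match j with
  | 0 =>
    rw [List.eraseIdx_cons_zero, wordProd_cons] at hj
    exact absurd (((parabolic cs J).mul_mem_cancel_right hu).mp (hj ▸ hv)) ha
  | 1 => rwa [List.eraseIdx_cons_succ, List.eraseIdx_cons_zero, wordProd_cons] at hj
  | j + 2 =>
    rw [List.eraseIdx_cons_succ, List.eraseIdx_cons_succ, wordProd_cons, wordProd_cons] at hj
    have hμ : cs.wordProd (ν.eraseIdx j) ∈ parabolic cs J :=
      wordProd_mem_parabolic fun k hk => hν k (List.mem_of_mem_eraseIdx hk)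
    rw [hj, (parabolic cs J).mul_mem_cancel_left hs,
      (parabolic cs J).mul_mem_cancel_right hμ] at hv
    exact absurd hv ha

theorem commute_and_isLeftDescent_of_isLeftDescent_simple_mul {v : W} (hv : v ∈ parabolic cs J)
    {a s : B} (ha : cs.simple a ∉ parabolic cs J) (hs : cs.simple s ≠ cs.simple a)
    (hd : cs.IsLeftDescent (cs.simple a * v) s) :
    Commute (cs.simple s) (cs.simple a) ∧ cs.IsLeftDescent v s := by
  obtain ⟨u, hu, hsav⟩ := exists_mem_parabolic_simple_mul_simple_mul_eq hv hs hd
  have hsJ : cs.simple s ∈ parabolic cs J :=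
    simple_mem_parabolic_of_isLeftDescent_simple_mul hv hs hd
  have hvu : v = cs.simple s * u :=
    eq_simple_mul_of_simple_mul_simple_mul_eq hv hu ha hsJ hsav
  constructor
  · rw [hvu, ← mul_assoc, ← mul_assoc, mul_left_inj] at hsav
    simpa only [inv_simple, Commute, SemiconjBy] using eq_mul_inv_of_mul_eq hsav
  · have hsv : cs.simple s * v = u := by rw [hvu, simple_mul_simple_cancel_left]
    have hlv := cs.not_isLeftDescent_iff.mp (not_isLeftDescent_of_mem_parabolic hv ha)
    have hlu := cs.not_isLeftDescent_iff.mp (not_isLeftDescent_of_mem_parabolic hu ha)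
    rw [IsLeftDescent, hsav] at hd
    rw [IsLeftDescent, hsv]
    lia

theorem simple_eq_of_isLeftDescent_wordProd_cons_of_isChain {a : B} {ω : List B}
    (hnodup : ((a :: ω).map cs.simple).Nodup)
    (hchain : (a :: ω).IsChain fun i j => ¬Commute (cs.simple j) (cs.simple i)) {s : B}
    (hs : cs.IsLeftDescent (cs.wordProd (a :: ω)) s) : cs.simple s = cs.simple a := by
  induction ω generalizing a with
  | nil => simpa using simple_mem_leftInvSeq_of_isLeftDescent hs
  | cons b ω ih =>
    by_contra hsa
    rw [List.map_cons, List.nodup_cons] at hnodup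
    have ha : cs.simple a ∉ parabolic cs {i | i ∈ b :: ω} := by
      rw [simple_mem_parabolic_iff]
      simpa [eq_comm] using hnodup.1
    obtain ⟨hcomm, hdesc⟩ := commute_and_isLeftDescent_of_isLeftDescent_simple_mul
      (wordProd_mem_parabolic fun i hi => hi) ha hsa (by rwa [← wordProd_cons])
    rw [ih hnodup.2 hchain.tail hdesc] at hcomm
    exact hchain.rel hcomm

end Parabolic

theorem bruhatLE_simple_mul_of_not_isLeftDescent {cs : CoxeterSystem M W} {v w : W}
    (hle : cs.bruhatLE v w) {s : B} (hs : ¬cs.IsLeftDescent v s) :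
    cs.bruhatLE v (cs.simple s * w) := by
  intro ω hω hprod
  obtain rfl : w = cs.simple s * cs.wordProd ω := by
    rw [hprod, simple_mul_simple_cancel_left]
  by_cases hd : cs.IsLeftDescent (cs.wordProd ω) s
  · obtain ⟨j, hj, herase⟩ := exists_simple_mul_wordProd_eq_eraseIdx hd
    obtain ⟨ν, hsub, hν⟩ :=
      hle _ (isReduced_eraseIdx_of_isLeftDescent hω hd hj herase) herase.symm
    exact ⟨ν, hsub.trans (ω.eraseIdx_sublist j), hν⟩
  · obtain ⟨ν, hsub, hν, rfl⟩ := hle _ ((isReduced_cons_iff hω).mpr hd) (wordProd_cons ..)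
    rcases List.sublist_cons_iff.mp hsub with hsub | ⟨μ, rfl, -⟩
    · exact ⟨ν, hsub, hν, rfl⟩
    · refine absurd ?_ hs
      rw [CoxeterSystem.IsLeftDescent, hν.eq, wordProd_cons, simple_mul_simple_cancel_left]
      exact Nat.lt_succ_of_le (cs.length_wordProd_le μ)

end CoxeterChain

/-- Let `t 0, …, t r` be pairwise distinct simple reflections such that
consecutive ones do not commute, let `w` satisfy `t 0 * ⋯ * t r ≤ w` in the Bruhat
order, and let `s` be a simple reflection different from `t 0`. Then
`t 0 * ⋯ * t r ≤ s * w` in the Bruhat order. -/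
theorem chain_le_mul_simple_of_ne
    {B : Type*} {W : Type*} [Group W] {M : CoxeterMatrix B} (cs : CoxeterSystem M W)
    (r : ℕ) (t : Fin (r + 1) → B)
    (hdist : Function.Injective fun i => cs.simple (t i))
    (hnc : ∀ i : Fin r,
      cs.simple (t i.succ) * cs.simple (t i.castSucc) ≠
        cs.simple (t i.castSucc) * cs.simple (t i.succ))
    (w : W) (hle : cs.bruhatLE (cs.wordProd (List.ofFn t)) w)
    (s : B) (hs : cs.simple s ≠ cs.simple (t 0)) :
    cs.bruhatLE (cs.wordProd (List.ofFn t)) (cs.simple s * w) := by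
  refine CoxeterChain.bruhatLE_simple_mul_of_not_isLeftDescent hle fun hd => hs ?_
  rw [List.ofFn_succ] at hd
  refine CoxeterChain.simple_eq_of_isLeftDescent_wordProd_cons_of_isChain ?_ ?_ hd
  · rw [← List.ofFn_succ, List.map_ofFn]
    exact List.nodup_ofFn.mpr hdist
  · rw [← List.ofFn_succ, List.isChain_ofFn]
    exact fun i hi => hnc ⟨i, Nat.lt_of_succ_lt_succ hi⟩
end

section
/- Let (W,S) be a Coxeter system and let t_0, t_1, …, t_r be pairwise distinct elements of S such that t_i t_{i-1} ≠ t_{i-1} t_i for all i = 1, …, r. Let P ⊆ S be a subset with t_0 ∉ P, and let W_P ⊆ W be the standard parabolic subgroup generated by P. Let x ∈ W with t_0 t_1 ⋯ t_r ≤ x in the Bruhat order. Then for every u ∈ W_P one has t_0 t_1 ⋯ t_r ≤ u x in the Bruhat order; in particular t_r belongs to the support supp(u x). -/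
/-- The support of an element `w` of a Coxeter group: the set of simple reflections
(indexed by `B`) occurring in every (equivalently, some) reduced word for `w`. -/
def CoxeterSystem.support {B : Type*} {W : Type*} [Group W] {M : CoxeterMatrix B}
    (cs : CoxeterSystem M W) (w : W) : Set B :=
  {i : B | ∀ ω : List B, cs.IsReduced ω → cs.wordProd ω = w → i ∈ ω}

/-!
The simple reflections `s` that are not left descents of `v` preserve `{x | v ≤ x}`: if `s * x < x`,
a reduced word for `v` inside a reduced word `s :: ω` for `x` cannot use the leading `s`; if
`s * x > x`, the exchange property finds a reduced word for `x` inside every one for `s * x`.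

It remains to see that `t 0` is the only left descent of `v = t 0 * ⋯ * t r`. By exchange, a left
descent `s` satisfies `s * p = p * t k` for some `p = t 0 * ⋯ * t (k - 1)`, so in the geometric
representation `p` maps the simple root of `t k` to a multiple of the simple root of `s`. As the
`t i` are distinct, the coordinate of this vector at `t k` is `1`, so `s = t k`; if `0 < k`, its
coordinate at `t (k - 1)` is nonzero because `t (k - 1)` and `t k` do not commute, which is absurd.
-/

namespace CoxeterBruhat

section ProductOfReflections

open Real Polynomial Module

lemma eval_S_two_mul_cos_pi_div {n : ℕ} (hn : 2 ≤ n) :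
    (Chebyshev.S ℝ (n - 1)).eval (2 * cos (π / n)) = 0 := by
  have hn' : (2 : ℝ) ≤ n := by exact_mod_cast hn
  have hsin : sin (π / n) ≠ 0 :=
    (sin_pos_of_pos_of_lt_pi (by positivity) (div_lt_self pi_pos (by linarith))).ne'
  have hangle : (((n - 1 : ℤ) : ℝ) + 1) * (π / n) = π := by
    push_cast
    field_simp
    ring
  refine (mul_eq_zero.mp ?_).resolve_right hsin
  rw [Chebyshev.S_two_mul_real_cos, hangle, sin_pi]

lemma eval_S_add_eval_S_two_mul_cos_two_pi_div {n : ℕ} (hn : 1 ≤ n) :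
    (Chebyshev.S ℝ n).eval (2 * cos (2 * π / (2 * n + 1))) +
      (Chebyshev.S ℝ (n - 1)).eval (2 * cos (2 * π / (2 * n + 1))) = 0 := by
  have hn' : (1 : ℝ) ≤ n := by exact_mod_cast hn
  have hsin : sin (2 * π / (2 * n + 1)) ≠ 0 := by
    refine (sin_pos_of_pos_of_lt_pi (by positivity) ?_).ne'
    rw [div_lt_iff₀ (by positivity)]
    nlinarith [pi_pos]
  have hangle : (((n : ℤ) : ℝ) + 1) * (2 * π / (2 * n + 1)) =
      2 * π - (((n - 1 : ℤ) : ℝ) + 1) * (2 * π / (2 * n + 1)) := by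
    push_cast
    field_simp
    ring
  refine (mul_eq_zero.mp ?_).resolve_right hsin
  rw [add_mul, Chebyshev.S_two_mul_real_cos, Chebyshev.S_two_mul_real_cos, hangle,
    sin_two_pi_sub, neg_add_cancel]

variable {V : Type*} [AddCommGroup V]

lemma reflection_mul_reflection_pow_eq_one [Module ℝ V] {x y : V} {f g : Dual ℝ V}
    (hf : f x = 2) (hg : g y = 2) {m : ℕ} (hm : 3 ≤ m) (hfg : f y * g x = 4 * cos (π / m) ^ 2) :
    (reflection hf * reflection hg) ^ m = 1 := by
  have htrace : 2 * cos (2 * π / m) = f y * g x - 2 := by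
    rw [hfg, mul_div_assoc, cos_two_mul]
    ring
  ext z
  rw [reflection_mul_reflection_pow_apply hf hg m z _ htrace]
  obtain ⟨n, rfl | rfl⟩ := m.even_or_odd'
  · have hS : (Chebyshev.S ℝ (n - 1)).eval (2 * cos (2 * π / (2 * n : ℕ))) = 0 := by
      rw [Nat.cast_mul, Nat.cast_two, mul_div_mul_left _ _ two_ne_zero]
      exact eval_S_two_mul_cos_pi_div (by omega)
    rw [show (((2 * n : ℕ) : ℤ) - 2) / 2 = n - 1 by omega,
      show (((2 * n : ℕ) : ℤ) - 1) / 2 = n - 1 by omega, hS]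
    simp
  · have hS := eval_S_add_eval_S_two_mul_cos_two_pi_div (n := n) (by omega)
    rw [show (((2 * n + 1 : ℕ) : ℤ) - 2) / 2 = n - 1 by omega,
      show (((2 * n + 1 : ℕ) : ℤ) - 1) / 2 = n by omega,
      show (((2 * n + 1 : ℕ) : ℤ) - 3) / 2 = n - 1 by omega,
      show ((2 * n + 1 : ℕ) : ℤ) / 2 = n by omega, Nat.cast_add, Nat.cast_mul, Nat.cast_two,
      Nat.cast_one, hS]
    simp

lemma reflection_mul_reflection_sq_eq_one {R : Type*} [CommRing R] [Module R V] {x y : V}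
    {f g : Dual R V} (hf : f x = 2) (hg : g y = 2) (hfy : f y = 0) (hgx : g x = 0) :
    (reflection hf * reflection hg) ^ 2 = 1 := by
  ext z
  simp only [pow_two, LinearEquiv.mul_apply, reflection_apply, map_sub, map_smul, hf, hg, hfy, hgx,
    LinearEquiv.coe_one, id_eq]
  module

end ProductOfReflections

variable {B W : Type*} [Group W] {M : CoxeterMatrix B}

section GeometricRepresentation

/-- The simple root `α_i` of the geometric representation, whose space has the simple roots as a
basis. -/
noncomputable def simpleRoot (i : B) : B →₀ ℝ := Finsupp.single i 1

/-- The simple coroot of the geometric representation, i.e. twice the pairing with `α_i` for the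
bilinear form `⟨α_i, α_j⟩ = -cos (π / M i j)`. An infinite bond is encoded by `M i j = 0`; since
`π / 0 = 0` in `ℝ`, the formula then gives the customary value `⟨α_i, α_j⟩ = -1`. -/
noncomputable def simpleCoroot (M : CoxeterMatrix B) (i : B) : Module.Dual ℝ (B →₀ ℝ) :=
  Finsupp.linearCombination ℝ fun j ↦ -2 * Real.cos (Real.pi / M i j)

lemma simpleCoroot_simpleRoot (i j : B) :
    simpleCoroot M i (simpleRoot j) = -2 * Real.cos (Real.pi / M i j) := by
  simp [simpleCoroot, simpleRoot]

lemma simpleCoroot_simpleRoot_self (i : B) : simpleCoroot M i (simpleRoot i) = 2 := by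
  simp [simpleCoroot_simpleRoot]

lemma isLiftable_reflection (M : CoxeterMatrix B) :
    M.IsLiftable fun i ↦ Module.reflection (simpleCoroot_simpleRoot_self (M := M) i) := by
  intro i j
  have hpair_ij := simpleCoroot_simpleRoot (M := M) i j
  have hpair_ji := simpleCoroot_simpleRoot (M := M) j i
  rw [M.symmetric j i] at hpair_ji
  rcases eq_or_ne i j with rfl | hij
  · rw [M.diagonal, pow_one, mul_eq_one_iff_eq_inv, Module.reflection_inv]
  have hM : M i j ≠ 1 := M.off_diagonal i j hij
  obtain hM | hM | hM : M i j = 0 ∨ M i j = 2 ∨ 3 ≤ M i j := by omega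
  · rw [hM, pow_zero]
  · rw [hM] at hpair_ij hpair_ji ⊢
    apply reflection_mul_reflection_sq_eq_one
    · simpa using hpair_ij
    · simpa using hpair_ji
  · apply reflection_mul_reflection_pow_eq_one _ _ hM
    rw [hpair_ij, hpair_ji]
    ring

/-- The geometric representation of a Coxeter group: `s_i` acts by the reflection in the simple
root `α_i`. -/
noncomputable def geometricRep (cs : CoxeterSystem M W) : W →* ((B →₀ ℝ) ≃ₗ[ℝ] (B →₀ ℝ)) :=
  cs.lift ⟨_, isLiftable_reflection M⟩

variable (cs : CoxeterSystem M W)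

lemma geometricRep_simple_apply (i : B) (z : B →₀ ℝ) :
    geometricRep cs (cs.simple i) z = z - simpleCoroot M i z • simpleRoot i := by
  rw [geometricRep, cs.lift_apply_simple, Module.reflection_apply]

lemma geometricRep_simple_simpleRoot_self (i : B) :
    geometricRep cs (cs.simple i) (simpleRoot i) = -simpleRoot i := by
  rw [geometricRep_simple_apply, simpleCoroot_simpleRoot_self]
  module

lemma geometricRep_simple_apply_of_ne {i j : B} (hij : i ≠ j) (z : B →₀ ℝ) :
    geometricRep cs (cs.simple i) z j = z j := by
  simp [geometricRep_simple_apply, simpleRoot, hij]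

lemma geometricRep_wordProd_apply_of_notMem {ω : List B} {j : B} (hj : j ∉ ω) (z : B →₀ ℝ) :
    geometricRep cs (cs.wordProd ω) z j = z j := by
  induction ω with
  | nil => simp
  | cons i ω ih =>
    obtain ⟨hji, hjω⟩ := not_or.mp (List.mem_cons.not.mp hj)
    rw [cs.wordProd_cons, map_mul, LinearEquiv.mul_apply,
      geometricRep_simple_apply_of_ne cs (Ne.symm hji), ih hjω]

variable {cs}

lemma mem_support_wordProd_append_singleton {p : List B} {c : B} (hc : c ∉ p) :
    c ∈ cs.support (cs.wordProd (p ++ [c])) := by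
  intro ω _ hω
  by_contra hcω
  have hcoord := geometricRep_wordProd_apply_of_notMem cs hcω (simpleRoot c)
  rw [hω, cs.wordProd_append, cs.wordProd_singleton, map_mul, LinearEquiv.mul_apply,
    geometricRep_simple_simpleRoot_self, geometricRep_wordProd_apply_of_notMem cs hc] at hcoord
  norm_num [simpleRoot] at hcoord

lemma geometricRep_simpleRoot_apply_eq_zero {w : W} {i c : B}
    (hw : cs.simple i * w = w * cs.simple c) {j : B} (hij : i ≠ j) :
    geometricRep cs w (simpleRoot c) j = 0 := by
  have hneg : geometricRep cs (cs.simple i) (geometricRep cs w (simpleRoot c)) =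
      -geometricRep cs w (simpleRoot c) := by
    rw [← LinearEquiv.mul_apply, ← map_mul, hw, map_mul, LinearEquiv.mul_apply,
      geometricRep_simple_simpleRoot_self, map_neg]
  have hcoord := geometricRep_simple_apply_of_ne cs hij (geometricRep cs w (simpleRoot c))
  rwa [hneg, Finsupp.neg_apply, neg_eq_self] at hcoord

lemma eq_of_simple_mul_wordProd_eq {p : List B} {i c : B}
    (hp : cs.simple i * cs.wordProd p = cs.wordProd p * cs.simple c) (hc : c ∉ p) : i = c := by
  by_contra hic
  have hzero := geometricRep_simpleRoot_apply_eq_zero hp hic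
  rw [geometricRep_wordProd_apply_of_notMem cs hc] at hzero
  simp [simpleRoot] at hzero

lemma eq_two_of_cos_pi_div_eq_zero {m : ℕ} (hm : Real.cos (Real.pi / m) = 0) : m = 2 := by
  by_contra hne
  obtain rfl | rfl | hm3 : m = 0 ∨ m = 1 ∨ 3 ≤ m := by omega
  · simp at hm
  · simp at hm
  · have hm3' : (3 : ℝ) ≤ m := by exact_mod_cast hm3
    have hlt : Real.pi / m < Real.pi / 2 :=
      div_lt_div_of_pos_left Real.pi_pos two_pos (by linarith)
    have hpos : 0 < Real.pi / m := div_pos Real.pi_pos (by linarith)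
    exact (Real.cos_pos_of_mem_Ioo ⟨by linarith, hlt⟩).ne' hm

lemma commute_simple_of_simpleCoroot_simpleRoot_eq_zero {i j : B}
    (hij : simpleCoroot M i (simpleRoot j) = 0) : Commute (cs.simple i) (cs.simple j) := by
  have hM : M i j = 2 := eq_two_of_cos_pi_div_eq_zero (by
    simpa [simpleCoroot_simpleRoot] using hij)
  have hsq := cs.simple_mul_simple_pow i j
  rw [hM, pow_two, mul_eq_one_iff_eq_inv, mul_inv_rev, cs.inv_simple, cs.inv_simple] at hsq
  exact hsq

lemma commute_simple_of_commute_wordProd_append_singleton {p : List B} {c d : B}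
    (hp : Commute (cs.simple c) (cs.wordProd (p ++ [d]))) (hd : d ∉ p) :
    Commute (cs.simple d) (cs.simple c) := by
  rcases eq_or_ne c d with rfl | hcd
  · exact Commute.refl _
  have hzero := geometricRep_simpleRoot_apply_eq_zero hp.eq hcd
  rw [cs.wordProd_append, map_mul, LinearEquiv.mul_apply,
    geometricRep_wordProd_apply_of_notMem cs hd, cs.wordProd_singleton,
    geometricRep_simple_apply] at hzero
  apply commute_simple_of_simpleCoroot_simpleRoot_eq_zero
  simpa [simpleRoot, hcd] using hzero

end GeometricRepresentation

section Exchange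

open CoxeterSystem

variable (cs : CoxeterSystem M W)

lemma exists_leftInvSeq_alternatingWord_eq_append_self (i j : B) :
    ∃ l, cs.leftInvSeq (alternatingWord i j (2 * M i j)) = l ++ l := by
  set l := cs.leftInvSeq (alternatingWord i j (2 * M i j)) with hl
  have hlen : l.length = 2 * M i j := by simp [hl]
  have hperiod (k : ℕ) (hk : k < M i j) : l[M i j + k] = l[k] := by
    simp only [hl]
    rw [cs.getElem_leftInvSeq_alternatingWord _ _ _ _ (by omega),
      cs.getElem_leftInvSeq_alternatingWord _ _ _ _ (by omega),
      cs.prod_alternatingWord_eq_mul_pow, cs.prod_alternatingWord_eq_mul_pow,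
      show (2 * (M i j + k) + 1) / 2 = M i j + k by omega,
      show (2 * k + 1) / 2 = k by omega, pow_add, cs.simple_mul_simple_pow', one_mul]
    simp
  refine ⟨l.take (M i j), ?_⟩
  nth_rw 1 [← List.take_append_drop (M i j) l]
  congr 1
  apply List.ext_getElem
  · rw [List.length_drop, List.length_take]
    omega
  · intro k _ hk
    simp only [List.getElem_drop, List.getElem_take]
    rw [List.length_take] at hk
    exact hperiod k (by omega)

lemma prod_map_reverse_alternatingWord {G : Type*} [Monoid G] (f : B → G) (i j : B) (n : ℕ) :
    ((alternatingWord i j (2 * n)).reverse.map f).prod = (f j * f i) ^ n := by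
  induction n with
  | zero => simp [alternatingWord]
  | succ n ih => simp [pow_succ, ← ih, mul_add, alternatingWord_succ']

open Classical in
/-- The permutation `(t, ε) ↦ (s_i t s_i, ε + [t = s_i])` of `W × ZMod 2`. Composing these along a
word conjugates the first component by the word, while the second one counts, modulo two, the
occurrences of `t` in the right inversion sequence. -/
noncomputable def signedConj (i : B) : Equiv.Perm (W × ZMod 2) :=
  Function.Involutive.toPerm
    (fun p ↦ (cs.simple i * p.1 * cs.simple i, p.2 + if p.1 = cs.simple i then 1 else 0)) <| by
    rintro ⟨t, ε⟩
    have hconj : cs.simple i * t * cs.simple i = cs.simple i ↔ t = cs.simple i := by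
      rw [mul_eq_right, mul_eq_one_iff_inv_eq, cs.inv_simple, eq_comm]
    ext
    · simp [mul_assoc]
    · simp only [hconj, add_assoc, CharTwo.add_self_eq_zero, add_zero]

open Classical in
lemma signedConj_apply (i : B) (t : W) (ε : ZMod 2) :
    signedConj cs i (t, ε) =
      (cs.simple i * t * cs.simple i, ε + if t = cs.simple i then 1 else 0) :=
  rfl

open Classical in
lemma prod_map_signedConj_apply (ω : List B) (t : W) (ε : ZMod 2) :
    (ω.map (signedConj cs)).prod (t, ε) =
      (cs.wordProd ω * t * (cs.wordProd ω)⁻¹, ε + (cs.rightInvSeq ω).count t) := by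
  induction ω with
  | nil => simp
  | cons i ω ih =>
    have hconj : cs.wordProd ω * t * (cs.wordProd ω)⁻¹ = cs.simple i ↔
        (cs.wordProd ω)⁻¹ * cs.simple i * cs.wordProd ω = t := by
      rw [mul_inv_eq_iff_eq_mul, mul_assoc, inv_mul_eq_iff_eq_mul, eq_comm]
    rw [List.map_cons, List.prod_cons, Equiv.Perm.mul_apply, ih, signedConj_apply]
    ext
    · simp [cs.wordProd_cons, mul_assoc]
    · simp [rightInvSeq, List.count_cons, hconj, add_assoc]

lemma isLiftable_signedConj : M.IsLiftable (signedConj cs) := by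
  classical
  intro i j
  obtain ⟨l, hl⟩ := exists_leftInvSeq_alternatingWord_eq_append_self cs j i
  ext1 ⟨t, ε⟩
  rw [M.symmetric i j, ← prod_map_reverse_alternatingWord, prod_map_signedConj_apply,
    cs.rightInvSeq_reverse, hl, List.count_reverse, List.count_append, Nat.cast_add,
    CharTwo.add_self_eq_zero, cs.wordProd_reverse, cs.prod_alternatingWord_eq_mul_pow]
  simp

/-- The action of `W` on `W × ZMod 2` extending `signedConj`. -/
noncomputable def signedConjHom : W →* Equiv.Perm (W × ZMod 2) :=
  cs.lift ⟨signedConj cs, isLiftable_signedConj cs⟩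

/-- The parity of the number of occurrences of `t` in the right inversion sequence of a word for
`w`. It does not depend on the word because it is read off the action of `w`. -/
noncomputable def inversionParity (w t : W) : ZMod 2 := (signedConjHom cs w (t, 0)).2

open Classical in
lemma signedConjHom_wordProd_apply (ω : List B) (t : W) (ε : ZMod 2) :
    signedConjHom cs (cs.wordProd ω) (t, ε) =
      (cs.wordProd ω * t * (cs.wordProd ω)⁻¹, ε + (cs.rightInvSeq ω).count t) := by
  rw [← prod_map_signedConj_apply, wordProd, map_list_prod, List.map_map]
  congr
  ext1 i
  exact cs.lift_apply_simple _ i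

open Classical in
lemma inversionParity_wordProd (ω : List B) (t : W) :
    inversionParity cs (cs.wordProd ω) t = (cs.rightInvSeq ω).count t := by
  rw [inversionParity, signedConjHom_wordProd_apply, zero_add]

lemma signedConjHom_apply (w t : W) (ε : ZMod 2) :
    signedConjHom cs w (t, ε) = (w * t * w⁻¹, ε + inversionParity cs w t) := by
  classical
  obtain ⟨ω, rfl⟩ := cs.wordProd_surjective w
  rw [inversionParity_wordProd, signedConjHom_wordProd_apply]

lemma inversionParity_one (t : W) : inversionParity cs 1 t = 0 := by
  simp [inversionParity]

lemma inversionParity_mul (v w t : W) :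
    inversionParity cs (v * w) t =
      inversionParity cs w t + inversionParity cs v (w * t * w⁻¹) := by
  rw [inversionParity, map_mul, Equiv.Perm.mul_apply, signedConjHom_apply, signedConjHom_apply,
    zero_add]

lemma inversionParity_simple_self (i : B) :
    inversionParity cs (cs.simple i) (cs.simple i) = 1 := by
  classical
  rw [← cs.wordProd_singleton, inversionParity_wordProd]
  simp

variable {cs}

lemma inversionParity_self {t : W} (ht : cs.IsReflection t) : inversionParity cs t t = 1 := by
  obtain ⟨u, i, rfl⟩ := ht
  have hcancel := inversionParity_mul cs u u⁻¹ (u * cs.simple i * u⁻¹)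
  have hconj : u⁻¹ * (u * cs.simple i * u⁻¹) * u⁻¹⁻¹ = cs.simple i := by group
  rw [mul_inv_cancel, inversionParity_one, hconj] at hcancel
  rw [inversionParity_mul, inversionParity_mul, hconj, inversionParity_simple_self,
    mul_inv_cancel_right]
  linear_combination -hcancel

lemma isRightInversion_of_inversionParity_ne_zero {w t : W} (h : inversionParity cs w t ≠ 0) :
    cs.IsRightInversion w t := by
  classical
  obtain ⟨ω, hω, rfl⟩ := cs.exists_isReduced w
  apply cs.isRightInversion_of_mem_rightInvSeq hω
  rw [inversionParity_wordProd] at h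
  exact of_not_not fun hmem ↦ h (by rw [List.count_eq_zero.mpr hmem, Nat.cast_zero])

lemma inversionParity_ne_zero_of_isRightInversion {w t : W} (h : cs.IsRightInversion w t) :
    inversionParity cs w t ≠ 0 := by
  intro hzero
  have ht : cs.IsReflection t := h.1
  apply ht.isRightInversion_mul_left_iff.mp _ h
  apply isRightInversion_of_inversionParity_ne_zero
  simp [inversionParity_mul, inversionParity_self ht, hzero]

lemma mem_rightInvSeq_of_isRightInversion {ω : List B} {t : W}
    (h : cs.IsRightInversion (cs.wordProd ω) t) : t ∈ cs.rightInvSeq ω := by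
  classical
  have hparity := inversionParity_ne_zero_of_isRightInversion h
  rw [inversionParity_wordProd] at hparity
  by_contra hmem
  exact hparity (by rw [List.count_eq_zero.mpr hmem, Nat.cast_zero])

lemma mem_leftInvSeq_of_isLeftInversion {ω : List B} {t : W}
    (h : cs.IsLeftInversion (cs.wordProd ω) t) : t ∈ cs.leftInvSeq ω := by
  rw [← cs.isRightInversion_inv_iff, ← cs.wordProd_reverse] at h
  simpa [cs.rightInvSeq_reverse] using mem_rightInvSeq_of_isRightInversion h

lemma exists_append_of_isLeftDescent {ω : List B} {i : B}
    (h : cs.IsLeftDescent (cs.wordProd ω) i) :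
    ∃ p c q, ω = p ++ c :: q ∧ cs.simple i * cs.wordProd p = cs.wordProd p * cs.simple c := by
  rw [← cs.isLeftInversion_simple_iff_isLeftDescent] at h
  obtain ⟨k, hk, hki⟩ := List.mem_iff_getElem.mp (mem_leftInvSeq_of_isLeftInversion h)
  rw [cs.length_leftInvSeq] at hk
  rw [cs.getElem_leftInvSeq ω k hk, mul_inv_eq_iff_eq_mul] at hki
  exact ⟨ω.take k, ω[k], ω.drop (k + 1), by simp, hki.symm⟩

end Exchange

section Bruhat

variable {cs : CoxeterSystem M W}

lemma exists_reduced_sublist_of_simple_mul {x : W} {i : B} (hx : ¬ cs.IsLeftDescent x i)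
    {ω : List B} (hω : cs.IsReduced ω) (hωx : cs.wordProd ω = cs.simple i * x) :
    ∃ ω' : List B, ω'.Sublist ω ∧ cs.IsReduced ω' ∧ cs.wordProd ω' = x := by
  have hdesc : cs.IsLeftDescent (cs.wordProd ω) i := by
    rwa [cs.isLeftDescent_iff_not_isLeftDescent_mul, hωx, cs.simple_mul_simple_cancel_left]
  obtain ⟨p, c, q, rfl, hpc⟩ := exists_append_of_isLeftDescent hdesc
  have hprod : cs.wordProd (p ++ q) = x := by
    rw [cs.wordProd_append, cs.wordProd_cons, ← mul_assoc, ← hpc, mul_assoc] at hωx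
    rw [cs.wordProd_append, mul_left_cancel hωx]
  refine ⟨p ++ q, (List.sublist_cons_self c q).append_left p, ?_, hprod⟩
  have hlen := hω.eq
  rw [hωx, cs.not_isLeftDescent_iff.mp hx] at hlen
  rw [CoxeterSystem.IsReduced, hprod]
  simp only [List.length_append, List.length_cons] at hlen ⊢
  omega

lemma isReduced_cons_of_isLeftDescent {x : W} {i : B} (hx : cs.IsLeftDescent x i) {ω : List B}
    (hω : cs.IsReduced ω) (hωx : cs.wordProd ω = cs.simple i * x) : cs.IsReduced (i :: ω) := by
  rw [CoxeterSystem.IsReduced, cs.wordProd_cons, hωx, cs.simple_mul_simple_cancel_left,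
    List.length_cons, ← hω.eq, hωx, cs.isLeftDescent_iff.mp hx]

lemma isLeftDescent_wordProd_cons {i : B} {ω : List B} (hω : cs.IsReduced (i :: ω)) :
    cs.IsLeftDescent (cs.wordProd (i :: ω)) i := by
  rw [CoxeterSystem.IsLeftDescent, hω.eq, cs.wordProd_cons, cs.simple_mul_simple_cancel_left,
    List.length_cons, Nat.lt_succ_iff]
  exact cs.length_wordProd_le ω

lemma bruhatLE_simple_mul {v x : W} {i : B} (hv : ¬ cs.IsLeftDescent v i)
    (hvx : cs.bruhatLE v x) : cs.bruhatLE v (cs.simple i * x) := by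
  intro ω hω hωx
  by_cases hx : cs.IsLeftDescent x i
  · obtain ⟨ω', hsub, hω', rfl⟩ := hvx (i :: ω) (isReduced_cons_of_isLeftDescent hx hω hωx) (by
      rw [cs.wordProd_cons, hωx, cs.simple_mul_simple_cancel_left])
    rcases List.sublist_cons_iff.mp hsub with hsub | ⟨τ, rfl, -⟩
    · exact ⟨ω', hsub, hω', rfl⟩
    · exact absurd (isLeftDescent_wordProd_cons hω') hv
  · obtain ⟨τ, hτω, hτ, hτx⟩ := exists_reduced_sublist_of_simple_mul hx hω hωx
    obtain ⟨ω', hsub, hω', hω'v⟩ := hvx τ hτ hτx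
    exact ⟨ω', hsub.trans hτω, hω', hω'v⟩

lemma bruhatLE_mul_of_mem_closure {P : Set B} {v x u : W} (hv : ∀ i ∈ P, ¬ cs.IsLeftDescent v i)
    (hvx : cs.bruhatLE v x) (hu : u ∈ Subgroup.closure (cs.simple '' P)) :
    cs.bruhatLE v (u * x) := by
  induction hu using Subgroup.closure_induction_left with
  | one => rwa [one_mul]
  | mul_left _ hs y _ ih =>
    obtain ⟨i, hi, rfl⟩ := hs
    rw [mul_assoc]
    exact bruhatLE_simple_mul (hv i hi) ih
  | inv_mul_cancel _ hs y _ ih =>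
    obtain ⟨i, hi, rfl⟩ := hs
    rw [cs.inv_simple, mul_assoc]
    exact bruhatLE_simple_mul (hv i hi) ih

lemma support_subset_of_bruhatLE {v w : W} (hvw : cs.bruhatLE v w) :
    cs.support v ⊆ cs.support w := by
  intro i hi ω hω hωw
  obtain ⟨ω', hsub, hω', hω'v⟩ := hvw ω hω hωw
  exact hsub.subset (hi ω' hω' hω'v)

lemma head?_eq_of_isLeftDescent {ω : List B} (hnodup : ω.Nodup)
    (hchain : ω.IsChain fun a b ↦ ¬ Commute (cs.simple a) (cs.simple b)) {i : B}
    (hi : cs.IsLeftDescent (cs.wordProd ω) i) : ω.head? = some i := by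
  obtain ⟨p, c, q, rfl, hp⟩ := exists_append_of_isLeftDescent hi
  have hcp : c ∉ p := by grind
  obtain rfl := eq_of_simple_mul_wordProd_eq hp hcp
  rcases List.eq_nil_or_concat' p with rfl | ⟨p, d, rfl⟩
  · rfl
  · have hdp : d ∉ p := by grind
    rw [List.append_assoc, List.singleton_append, List.isChain_append_cons_cons] at hchain
    exact absurd (commute_simple_of_commute_wordProd_append_singleton hp hdp) hchain.2.1

end Bruhat

end CoxeterBruhat

/-- Let `t 0, …, t r` be pairwise distinct simple reflections such that
consecutive ones do not commute, let `P` be a set of simple reflections with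
`t 0 ∉ P`, and let `W_P` be the standard parabolic subgroup generated by `P`. If
`x ∈ W` satisfies `t 0 * ⋯ * t r ≤ x` in the Bruhat order, then for every `u ∈ W_P`
one has `t 0 * ⋯ * t r ≤ u * x` in the Bruhat order; in particular `t r` belongs to
the support of `u * x`. -/
theorem chain_le_parabolic_mul_and_mem_support
    {B : Type*} {W : Type*} [Group W] {M : CoxeterMatrix B} (cs : CoxeterSystem M W)
    (r : ℕ) (t : Fin (r + 1) → B)
    (hdist : Function.Injective fun i => cs.simple (t i))
    (hnc : ∀ i : Fin r,
      cs.simple (t i.succ) * cs.simple (t i.castSucc) ≠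
        cs.simple (t i.castSucc) * cs.simple (t i.succ))
    (P : Set B) (hP : t 0 ∉ P)
    (x : W) (hle : cs.bruhatLE (cs.wordProd (List.ofFn t)) x) :
    ∀ u ∈ Subgroup.closure (cs.simple '' P),
      cs.bruhatLE (cs.wordProd (List.ofFn t)) (u * x) ∧
        t (Fin.last r) ∈ cs.support (u * x) := by
  have ht : Function.Injective t := Function.Injective.of_comp (f := cs.simple) hdist
  have hnodup : (List.ofFn t).Nodup := List.nodup_ofFn.mpr ht
  have hchain : (List.ofFn t).IsChain fun a b ↦ ¬ Commute (cs.simple a) (cs.simple b) :=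
    List.isChain_ofFn.mpr fun i hi h ↦ hnc ⟨i, by omega⟩ h.symm
  have hdescent : ∀ i ∈ P, ¬ cs.IsLeftDescent (cs.wordProd (List.ofFn t)) i := by
    intro i hi h
    have hhead := CoxeterBruhat.head?_eq_of_isLeftDescent hnodup hchain h
    rw [List.ofFn_succ, List.head?_cons, Option.some_inj] at hhead
    exact hP (hhead ▸ hi)
  have hlast : t (Fin.last r) ∈ cs.support (cs.wordProd (List.ofFn t)) := by
    rw [List.ofFn_succ', List.concat_eq_append]
    apply CoxeterBruhat.mem_support_wordProd_append_singleton
    simp [List.mem_ofFn, ht.eq_iff, Fin.castSucc_ne_last]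
  intro u hu
  have hux := CoxeterBruhat.bruhatLE_mul_of_mem_closure hdescent hle hu
  exact ⟨hux, CoxeterBruhat.support_subset_of_bruhatLE hux hlast⟩
end

section
/- Let p be a prime, let k be an algebraically closed field of characteristic p, and let σ: k^n → k^n be the coordinatewise Frobenius (a_1, …, a_n) ↦ (a_1^p, …, a_n^p). Let a = (a_1, …, a_n) ∈ k^n. Then the n vectors σ(a), σ^2(a), …, σ^n(a) are linearly independent over k if and only if the coordinates a_1, …, a_n are linearly independent over the prime field 𝔽_p (equivalently, if and only if the line k·a is not contained in any hyperplane of k^n defined over 𝔽_p). -/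
/-!
Let `F` be a finite field with `q` elements. A linear relation `c` between the Frobenius iterates of
`a` says that the polynomial `∑ cᵢ X ^ qⁱ` vanishes at every coordinate `aⱼ`. Evaluating this
polynomial is an `F`-linear map, so it vanishes on the whole `F`-span of the `aⱼ`; if these are
independent, the span has more elements than the degree of the polynomial, which is therefore zero.
Conversely, a relation over `F` between the `aⱼ` is preserved by Frobenius and hence becomes a
relation between the columns of the square matrix `(aⱼ ^ qⁱ)`, whose rows are the iterates. The
iterates may be counted from `a` itself rather than from its Frobenius image, because Frobenius is
an injective `F`-linear map.
-/

open Polynomial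

section LinearizedPolynomial

variable {R : Type*} [Semiring R] {q m : ℕ}

/-- The linearized polynomial (`q`-polynomial) `∑ cᵢ X ^ qⁱ`. It turns a relation between Frobenius
iterates into a statement about roots. The sum has `m` terms, `i = 0, …, m - 1`. -/
noncomputable def linearizedPolynomial (q : ℕ) (c : Fin m → R) : R[X] :=
  ∑ i, C (c i) * X ^ q ^ (i : ℕ)

theorem coeff_linearizedPolynomial (hq : 1 < q) (c : Fin m → R) (i : Fin m) :
    (linearizedPolynomial q c).coeff (q ^ (i : ℕ)) = c i := by
  simp [linearizedPolynomial, coeff_C_mul, coeff_X_pow, (Nat.pow_right_injective hq).eq_iff,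
    Fin.val_inj]

theorem degree_linearizedPolynomial_lt (hq : 1 < q) (c : Fin m → R) :
    (linearizedPolynomial q c).degree < (q ^ m : ℕ) := by
  refine (degree_sum_le _ _).trans_lt ?_
  refine (Finset.sup_lt_iff (WithBot.bot_lt_coe _)).mpr fun i _ => ?_
  calc (C (c i) * X ^ q ^ (i : ℕ)).degree
    _ ≤ ((q ^ (i : ℕ) : ℕ) : WithBot ℕ) := degree_C_mul_X_pow_le _ _
    _ < ((q ^ m : ℕ) : WithBot ℕ) := Nat.cast_lt.mpr (Nat.pow_lt_pow_right hq i.is_lt)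

end LinearizedPolynomial

/-- The Moore matrix, with `m` rows and entry `aⱼ ^ qⁱ` in row `i` and column `j`. Its rows are the
successive iterates of `x ↦ x ^ q` on the vector `a`, beginning with `a` itself. -/
def mooreMatrix {R ι : Type*} [Monoid R] (q m : ℕ) (a : ι → R) : Matrix (Fin m) ι R :=
  .of fun i j => a j ^ q ^ (i : ℕ)

section FiniteField

variable (F : Type*) [Field F] [Fintype F] {R : Type*} [CommRing R] [Algebra F R]

open Fintype (card)

/-- The first `m` iterates `(x, x ^ q, …, x ^ q ^ (m - 1))` of the `q`-Frobenius, `q = card F`,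
as a function of `x`. Bundling them as an `F`-linear map transports `F`-linear relations. -/
def frobeniusIterates (m : ℕ) : R →ₗ[F] Fin m → R :=
  LinearMap.pi fun i => (FiniteField.frobeniusAlgHom F R ^ (i : ℕ)).toLinearMap

theorem frobeniusIterates_apply (m : ℕ) (x : R) (i : Fin m) :
    frobeniusIterates F m x i = x ^ card F ^ (i : ℕ) := by
  simp [frobeniusIterates, AlgHom.coe_pow, FiniteField.coe_frobeniusAlgHom, pow_iterate]

theorem col_mooreMatrix {ι : Type*} (m : ℕ) (a : ι → R) :
    (mooreMatrix (card F) m a).col = frobeniusIterates F m ∘ a := by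
  ext j i
  exact (frobeniusIterates_apply F m (a j) i).symm

theorem eval_linearizedPolynomial {m : ℕ} (c : Fin m → R) (x : R) :
    (linearizedPolynomial (card F) c).eval x = c ⬝ᵥ frobeniusIterates F m x := by
  simp [linearizedPolynomial, eval_finsetSum, dotProduct, frobeniusIterates_apply]

theorem eval_linearizedPolynomial_linearCombination {ι : Type*} [Fintype ι] {m : ℕ}
    (c : Fin m → R) (a : ι → R) (φ : ι → F) :
    (linearizedPolynomial (card F) c).eval (Fintype.linearCombination F a φ) =
      ∑ j, φ j • (linearizedPolynomial (card F) c).eval (a j) := by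
  simp only [eval_linearizedPolynomial, Fintype.linearCombination_apply, map_sum, map_smul,
    dotProduct_sum, dotProduct_smul]

variable {F}

theorem linearizedPolynomial_eq_zero_of_eval_eq_zero [IsDomain R] {ι : Type*} [Fintype ι] {m : ℕ}
    {a : ι → R} (ha : LinearIndependent F a) (hm : m ≤ card ι) {c : Fin m → R}
    (hc : ∀ j, (linearizedPolynomial (card F) c).eval (a j) = 0) :
    linearizedPolynomial (card F) c = 0 := by
  classical
  have hinj : Function.Injective (Fintype.linearCombination F a) :=
    linearIndependent_iff_injective_fintypeLinearCombination.mp ha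
  have hdeg : (linearizedPolynomial (card F) c).degree < card (ι → F) := by
    refine (degree_linearizedPolynomial_lt Fintype.one_lt_card c).trans_le (Nat.cast_le.mpr ?_)
    rw [Fintype.card_fun]
    exact Nat.pow_le_pow_right Fintype.card_pos hm
  refine eq_zero_of_degree_lt_of_eval_index_eq_zero Finset.univ hinj.injOn hdeg fun φ _ => ?_
  simp only [eval_linearizedPolynomial_linearCombination, hc, smul_zero, Finset.sum_const_zero]

theorem linearIndependent_row_mooreMatrix [IsDomain R] {ι : Type*} [Fintype ι] {m : ℕ}
    {a : ι → R} (ha : LinearIndependent F a) (hm : m ≤ card ι) :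
    LinearIndependent R (mooreMatrix (card F) m a).row := by
  refine Fintype.linearIndependent_iff.mpr fun c hc i => ?_
  have hroot (j : ι) : (linearizedPolynomial (card F) c).eval (a j) = 0 := by
    simpa [linearizedPolynomial, eval_finsetSum, mooreMatrix] using congrFun hc j
  rw [← coeff_linearizedPolynomial (Fintype.one_lt_card (α := F)) c i,
    linearizedPolynomial_eq_zero_of_eval_eq_zero ha hm hroot, coeff_zero]

theorem linearIndependent_of_col_mooreMatrix [Nontrivial R] {ι : Type*} {m : ℕ} {a : ι → R}
    (h : LinearIndependent R (mooreMatrix (card F) m a).col) : LinearIndependent F a := by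
  rw [col_mooreMatrix] at h
  exact (h.restrict_scalars' F).of_comp

theorem linearIndependent_row_mooreMatrix_iff [IsDomain R] {n : ℕ} {a : Fin n → R} :
    LinearIndependent R (mooreMatrix (card F) n a).row ↔ LinearIndependent F a :=
  ⟨fun h => linearIndependent_of_col_mooreMatrix (Matrix.linearIndependent_col_iff_row.mpr h),
    fun h => linearIndependent_row_mooreMatrix h (Fintype.card_fin n).ge⟩

theorem linearIndependent_pow_card_iff [IsReduced R] {ι : Type*} {a : ι → R} :
    LinearIndependent F (fun j => a j ^ card F) ↔ LinearIndependent F a := by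
  have hinj : Function.Injective (FiniteField.frobeniusAlgHom F R) :=
    (injective_iff_map_eq_zero _).mpr fun _ => eq_zero_of_pow_eq_zero
  exact (FiniteField.frobeniusAlgHom F R).toLinearMap.linearIndependent_iff_of_injOn hinj.injOn

end FiniteField

theorem linearIndependent_iff_not_line_le_hyperplane {S A ι : Type*} [CommRing S] [Ring A]
    [Algebra S A] [Fintype ι] {a : ι → A} :
    LinearIndependent S a ↔
      ¬ ∃ φ : ι → S, φ ≠ 0 ∧ ∀ c : A, ∑ j, algebraMap S A (φ j) * (c * a j) = 0 := by
  have scale (φ : ι → S) (c : A) :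
      ∑ j, algebraMap S A (φ j) * (c * a j) = c * ∑ j, φ j • a j := by
    simp only [← Algebra.smul_def, Finset.mul_sum, mul_smul_comm]
  have line_iff (φ : ι → S) :
      (∀ c : A, ∑ j, algebraMap S A (φ j) * (c * a j) = 0) ↔ ∑ j, φ j • a j = 0 := by
    simp only [scale]
    exact ⟨fun h => by simpa using h 1, fun h c => by rw [h, mul_zero]⟩
  simp only [line_iff, Fintype.linearIndependent_iff, not_exists, not_and', not_not, funext_iff,
    Pi.zero_apply, ne_eq]

theorem frobenius_iterates_linearIndependent_iff_general (F : Type*) [Field F] [Fintype F]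
    {R : Type*} [CommRing R] [IsDomain R] [Algebra F R] {n : ℕ} (a : Fin n → R) :
    (LinearIndependent R
        (fun i : Fin n => (fun j : Fin n => a j ^ Fintype.card F ^ ((i : ℕ) + 1) : Fin n → R)) ↔
      LinearIndependent F a) ∧
    (LinearIndependent R
        (fun i : Fin n => (fun j : Fin n => a j ^ Fintype.card F ^ ((i : ℕ) + 1) : Fin n → R)) ↔
      ¬ ∃ φ : Fin n → F, φ ≠ 0 ∧
        ∀ c : R, ∑ j : Fin n, algebraMap F R (φ j) * (c * a j) = 0) := by
  have rows_eq : (fun (i j : Fin n) => a j ^ Fintype.card F ^ ((i : ℕ) + 1)) =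
      (mooreMatrix (Fintype.card F) n fun j => a j ^ Fintype.card F).row := by
    ext i j
    simp [mooreMatrix, ← pow_mul, ← pow_succ']
  rw [← linearIndependent_iff_not_line_le_hyperplane, and_self, rows_eq,
    linearIndependent_row_mooreMatrix_iff, linearIndependent_pow_card_iff]

/-- Let `p` be a prime, `k` an algebraically closed field of
characteristic `p`, and `σ` the coordinatewise Frobenius on `k^n`. For `a ∈ k^n`, the
vectors `σ a, σ² a, …, σⁿ a` are linearly independent over `k` if and only if the
coordinates `a 1, …, a n` are linearly independent over the prime field `𝔽_p`;
equivalently, if and only if the line `k · a` is not contained in any hyperplane of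
`k^n` defined over `𝔽_p` (the zero set of a nonzero linear form with coefficients in
`𝔽_p`). -/
theorem frobenius_iterates_linearIndependent_iff
    (p : ℕ) [Fact p.Prime] (k : Type*) [Field k] [IsAlgClosed k] [CharP k p]
    [Algebra (ZMod p) k]
    (n : ℕ) (a : Fin n → k) :
    (LinearIndependent k
        (fun i : Fin n => (fun j : Fin n => a j ^ p ^ ((i : ℕ) + 1) : Fin n → k)) ↔
      LinearIndependent (ZMod p) a) ∧
    (LinearIndependent k
        (fun i : Fin n => (fun j : Fin n => a j ^ p ^ ((i : ℕ) + 1) : Fin n → k)) ↔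
      ¬ ∃ φ : Fin n → ZMod p, φ ≠ 0 ∧
        ∀ c : k, ∑ j : Fin n, algebraMap (ZMod p) k (φ j) * (c * a j) = 0) := by
  simpa only [ZMod.card] using frobenius_iterates_linearIndependent_iff_general (ZMod p) a
end
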